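/- arXiv:1805.10348 — 7 statements merged into one kernel-verified Lean document; each statement's English description precedes it below -/
import Mathlib

section
/- Let d, R be positive integers, λ : Fin R → ℝ, and let U ∈ ℝ^{d×R} satisfy Uᵀ U = I_R. Define the symmetric tensor T(a,b,c) = Σ_{m=1}^{R} λ_m U_{a m} U_{b m} U_{c m}. Let v ∈ ℝ^d be the vector of slice traces, v_k = Σ_{l=1}^{d} T(l,l,k), and let N be the d×d matrix N_{i j} = Σ_{k=1}^{d} T(i,j,k) v_k. Then N = U · Diag(λ_1², …, λ_R²) · Uᵀ; i.e., N_{i j} = Σ_{m=1}^{R} λ_m² U_{i m} U_{j m} for all i, j. -/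
open Matrix BigOperators

/-- Slice-based initialization for a symmetric orthogonal CP tensor:
contracting the tensor with the vector of slice traces yields `U Diag(λ²) Uᵀ`. -/
theorem symmetric_trace_contraction
    {d R : ℕ} (hd : 0 < d) (hR : 0 < R) (lam : Fin R → ℝ)
    (U : Matrix (Fin d) (Fin R) ℝ) (hU : Uᵀ * U = 1)
    (T : Fin d → Fin d → Fin d → ℝ)
    (hT : ∀ a b c, T a b c = ∑ m, lam m * U a m * U b m * U c m)
    (v : Fin d → ℝ) (hv : ∀ k, v k = ∑ l, T l l k)
    (N : Matrix (Fin d) (Fin d) ℝ)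
    (hN : ∀ i j, N i j = ∑ k, T i j k * v k) :
    ∀ i j, N i j = ∑ m, lam m ^ 2 * U i m * U j m := by
  have orth : ∀ m n, ∑ k, U k m * U k n = if m = n then 1 else 0 := fun m n => by
    simpa [Matrix.mul_apply, Matrix.one_apply] using congrFun (congrFun hU m) n
  have trace_eq : ∀ k, v k = ∑ m, lam m * U k m := fun k => by
    simp only [hv, hT]
    rw [Finset.sum_comm]
    refine Finset.sum_congr rfl fun m _ => ?_
    calc ∑ l, lam m * U l m * U l m * U k m
        = lam m * U k m * ∑ l, U l m * U l m := by
          rw [Finset.mul_sum]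
          exact Finset.sum_congr rfl fun l _ => by ring
      _ = lam m * U k m := by simp [orth]
  have contract : ∀ m, ∑ k, U k m * v k = lam m := fun m => by
    simp only [trace_eq, Finset.mul_sum]
    rw [Finset.sum_comm]
    calc ∑ n, ∑ k, U k m * (lam n * U k n)
        = ∑ n, lam n * ∑ k, U k m * U k n := by
          simp only [Finset.mul_sum, mul_left_comm]
      _ = lam m := by simp [orth]
  intro i j
  simp only [hN, hT, Finset.sum_mul]
  rw [Finset.sum_comm]
  refine Finset.sum_congr rfl fun m _ => ?_
  calc ∑ k, lam m * U i m * U j m * U k m * v k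
      = lam m * U i m * U j m * ∑ k, U k m * v k := by
        simp only [Finset.mul_sum, mul_assoc]
    _ = lam m ^ 2 * U i m * U j m := by rw [contract]; ring
end

section
/- Let q ≥ 0 and let t_A, t_B, t_C : ℕ → ℝ be sequences of nonnegative reals satisfying, for every k ≥ 0: t_A(k+1) ≤ q · t_B(k) · t_C(k), t_B(k+1) ≤ q · t_A(k) · t_C(k), and t_C(k+1) ≤ q · t_A(k) · t_B(k). Then for every K ≥ 1, t_A(K) ≤ q^{2^K − 1} · t_A(0)^{a_K} · (t_B(0) · t_C(0))^{b_K}, where a_K = (2^K + 2·(−1)^K)/3 and b_K = (2^K − (−1)^K)/3 (these are natural numbers for every K ≥ 1). -/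
open BigOperators

/-- One step of the recursion `z ≤ q x y`, applied to monomial bounds on `x` and `y`. -/
theorem le_monomial_of_le_mul {q A B C x y z : ℝ} {m a b : ℕ} (hq : 0 ≤ q) (hx0 : 0 ≤ x)
    (hy0 : 0 ≤ y) (hz : z ≤ q * x * y)
    (hx : x ≤ q ^ m * B ^ a * (A * C) ^ b) (hy : y ≤ q ^ m * C ^ a * (A * B) ^ b) :
    z ≤ q ^ (2 * m + 1) * A ^ (2 * b) * (B * C) ^ (a + b) :=
  calc z ≤ q * (x * y) := by rwa [← mul_assoc]
    _ ≤ q * ((q ^ m * B ^ a * (A * C) ^ b) * (q ^ m * C ^ a * (A * B) ^ b)) :=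
      mul_le_mul_of_nonneg_left (mul_le_mul hx hy hy0 (hx0.trans hx)) hq
    _ = q ^ (2 * m + 1) * A ^ (2 * b) * (B * C) ^ (a + b) := by ring

/-- Simultaneous monomial bounds on the three sequences, with the exponents characterized by
their closed forms. -/
theorem exists_monomial_bounds
    (q : ℝ) (hq : 0 ≤ q) (tA tB tC : ℕ → ℝ)
    (hA : ∀ k, 0 ≤ tA k) (hB : ∀ k, 0 ≤ tB k) (hC : ∀ k, 0 ≤ tC k)
    (hrecA : ∀ k, tA (k + 1) ≤ q * tB k * tC k)
    (hrecB : ∀ k, tB (k + 1) ≤ q * tA k * tC k)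
    (hrecC : ∀ k, tC (k + 1) ≤ q * tA k * tB k) (K : ℕ) :
    ∃ a b : ℕ, 3 * (a : ℤ) = 2 ^ K + 2 * (-1) ^ K ∧ 3 * (b : ℤ) = 2 ^ K - (-1) ^ K ∧
      tA K ≤ q ^ (2 ^ K - 1) * tA 0 ^ a * (tB 0 * tC 0) ^ b ∧
      tB K ≤ q ^ (2 ^ K - 1) * tB 0 ^ a * (tA 0 * tC 0) ^ b ∧
      tC K ≤ q ^ (2 ^ K - 1) * tC 0 ^ a * (tA 0 * tB 0) ^ b := by
  induction K with
  | zero => exact ⟨1, 0, by simp⟩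
  | succ K ih =>
    obtain ⟨a, b, ha, hb, bA, bB, bC⟩ := ih
    have hm : 2 ^ (K + 1) - 1 = 2 * (2 ^ K - 1) + 1 := by
      have := Nat.one_le_two_pow (n := K)
      omega
    refine ⟨2 * b, a + b, ?_, ?_, ?_, ?_, ?_⟩
    · push_cast
      linear_combination 2 * hb
    · push_cast
      linear_combination ha + hb
    · rw [hm]
      exact le_monomial_of_le_mul hq (hB K) (hC K) (hrecA K) bB bC
    · rw [hm]
      rw [mul_comm (tA 0) (tB 0)] at bC
      exact le_monomial_of_le_mul hq (hA K) (hC K) (hrecB K) bA bC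
    · rw [hm]
      rw [mul_comm (tB 0) (tC 0)] at bA
      rw [mul_comm (tA 0) (tC 0)] at bB
      exact le_monomial_of_le_mul hq (hA K) (hB K) (hrecC K) bA bB

/-- Abstract tangent recursion of alternating subspace iteration: nonnegative sequences
satisfying `t_A(k+1) ≤ q t_B(k) t_C(k)` (and cyclic variants) obey the closed-form
doubly-exponential bound with exponents `a_K = (2^K + 2(−1)^K)/3`, `b_K = (2^K − (−1)^K)/3`. -/
theorem tangent_recursion_bound
    (q : ℝ) (hq : 0 ≤ q) (tA tB tC : ℕ → ℝ)
    (hA : ∀ k, 0 ≤ tA k) (hB : ∀ k, 0 ≤ tB k) (hC : ∀ k, 0 ≤ tC k)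
    (hrecA : ∀ k, tA (k + 1) ≤ q * tB k * tC k)
    (hrecB : ∀ k, tB (k + 1) ≤ q * tA k * tC k)
    (hrecC : ∀ k, tC (k + 1) ≤ q * tA k * tB k) :
    ∀ K, 1 ≤ K → ∀ aK bK : ℕ,
      3 * (aK : ℤ) = 2 ^ K + 2 * (-1) ^ K →
      3 * (bK : ℤ) = 2 ^ K - (-1) ^ K →
      tA K ≤ q ^ (2 ^ K - 1) * tA 0 ^ aK * (tB 0 * tC 0) ^ bK := by
  intro K _ aK bK haK hbK
  obtain ⟨a, b, ha, hb, bound, -⟩ :=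
    exists_monomial_bounds q hq tA tB tC hA hB hC hrecA hrecB hrecC K
  obtain rfl : aK = a := by omega
  obtain rfl : bK = b := by omega
  exact bound
end

section
/- Let d ≥ r ≥ 1, let Φ : Fin d × Fin d × Fin d → ℝ and φ ≥ 0 satisfy |Σ_{k,z,u} Φ(k,z,u) x_k y_z w_u| ≤ φ·‖x‖·‖y‖·‖w‖ for all x, y, w ∈ ℝ^d. Let A ∈ ℝ^{d×r} have orthonormal columns (Aᵀ A = I_r), and let Q_B, Q_C ∈ ℝ^{d×r} have columns of Euclidean norm at most 1. Define M ∈ ℝ^{r×r} by M_{i j} = Σ_{k,z,u} Φ(k,z,u) · A_{k i} · (Q_B)_{z j} · (Q_C)_{u j}. Then for all x, y ∈ ℝ^r, |xᵀ M y| ≤ √r · φ · ‖x‖ · ‖y‖. -/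
open Matrix BigOperators

/-- Euclidean norm of a finite real vector. -/
noncomputable def eunorm {n : ℕ} (x : Fin n → ℝ) : ℝ := Real.sqrt (∑ i, x i ^ 2)

theorem eunorm_nonneg {n : ℕ} (x : Fin n → ℝ) : 0 ≤ eunorm x := Real.sqrt_nonneg _

theorem eunorm_eq_sqrt_dotProduct {n : ℕ} (x : Fin n → ℝ) : eunorm x = Real.sqrt (x ⬝ᵥ x) := by
  simp only [eunorm, dotProduct, pow_two]

/-- A matrix with orthonormal columns acts isometrically. -/
theorem eunorm_mulVec_of_transpose_mul_self {d r : ℕ} {A : Matrix (Fin d) (Fin r) ℝ}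
    (hA : Aᵀ * A = 1) (x : Fin r → ℝ) : eunorm (A *ᵥ x) = eunorm x := by
  rw [eunorm_eq_sqrt_dotProduct, eunorm_eq_sqrt_dotProduct, dotProduct_mulVec,
    ← mulVec_transpose, mulVec_mulVec, hA, one_mulVec]

theorem sum_abs_le_sqrt_mul_eunorm {n : ℕ} (y : Fin n → ℝ) :
    ∑ j, |y j| ≤ Real.sqrt n * eunorm y := by
  rw [eunorm, ← Real.sqrt_mul (Nat.cast_nonneg n)]
  apply Real.le_sqrt_of_sq_le
  simpa using sq_sum_le_card_mul_sum_sq (s := Finset.univ) (f := fun j => |y j|)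

/-- Perturbation in the convergence step: the compressed noise matrix
`M = Aᵀ Φ₍₁₎ (Q_C ⊙ Q_B)` satisfies `|xᵀ M y| ≤ √r · φ · ‖x‖ · ‖y‖`. -/
theorem compressed_noise_bound
    {d r : ℕ} (hr : 1 ≤ r) (hrd : r ≤ d)
    (Φ : Fin d → Fin d → Fin d → ℝ) (φ : ℝ) (hφ : 0 ≤ φ)
    (hop : ∀ x y w : Fin d → ℝ,
      |∑ k, ∑ z, ∑ u, Φ k z u * x k * y z * w u| ≤ φ * eunorm x * eunorm y * eunorm w)
    (A QB QC : Matrix (Fin d) (Fin r) ℝ) (hA : Aᵀ * A = 1)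
    (hQB : ∀ j, eunorm (fun z => QB z j) ≤ 1)
    (hQC : ∀ j, eunorm (fun z => QC z j) ≤ 1)
    (M : Matrix (Fin r) (Fin r) ℝ)
    (hM : ∀ i j, M i j = ∑ k, ∑ z, ∑ u, Φ k z u * A k i * QB z j * QC u j) :
    ∀ x y : Fin r → ℝ,
      |∑ i, ∑ j, x i * M i j * y j| ≤ Real.sqrt r * φ * eunorm x * eunorm y := by
  intro x y
  have hcontract : ∀ j, ∑ i, x i * M i j =
      ∑ k, ∑ z, ∑ u, Φ k z u * (A *ᵥ x) k * QB z j * QC u j := by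
    intro j
    simp only [hM, mulVec, dotProduct, Finset.mul_sum, Finset.sum_mul]
    rw [Finset.sum_comm]
    refine Finset.sum_congr rfl fun k _ => ?_
    rw [Finset.sum_comm]
    refine Finset.sum_congr rfl fun z _ => ?_
    rw [Finset.sum_comm]
    exact Finset.sum_congr rfl fun u _ => Finset.sum_congr rfl fun i _ => by ring
  have hφx : 0 ≤ φ * eunorm x := mul_nonneg hφ (eunorm_nonneg x)
  have hcolumn : ∀ j, |∑ i, x i * M i j| ≤ φ * eunorm x := by
    intro j
    rw [hcontract]
    refine (hop (A *ᵥ x) (fun z => QB z j) (fun u => QC u j)).trans ?_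
    rw [eunorm_mulVec_of_transpose_mul_self hA, mul_assoc]
    exact mul_le_of_le_one_right hφx (mul_le_one₀ (hQB j) (eunorm_nonneg _) (hQC j))
  calc |∑ i, ∑ j, x i * M i j * y j|
      = |∑ j, (∑ i, x i * M i j) * y j| := by
        rw [Finset.sum_comm]
        simp only [Finset.sum_mul]
    _ ≤ ∑ j, |∑ i, x i * M i j| * |y j| := by
        simpa only [abs_mul] using
          Finset.abs_sum_le_sum_abs (fun j => (∑ i, x i * M i j) * y j) Finset.univ
    _ ≤ ∑ j, φ * eunorm x * |y j| :=
        Finset.sum_le_sum fun j _ => mul_le_mul_of_nonneg_right (hcolumn j) (abs_nonneg _)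
    _ = φ * eunorm x * ∑ j, |y j| := by rw [Finset.mul_sum]
    _ ≤ φ * eunorm x * (Real.sqrt r * eunorm y) :=
        mul_le_mul_of_nonneg_left (sum_abs_le_sqrt_mul_eunorm y) hφx
    _ = Real.sqrt r * φ * eunorm x * eunorm y := by ring
end

section
/- Let d ≥ R ≥ 1, λ : Fin R → ℝ, let A ∈ ℝ^{d×R} have orthonormal columns, and let B, C ∈ ℝ^{d×R} have columns of Euclidean norm at most 1. Define T(a,b,c) = Σ_{j=1}^{R} λ_j A_{a j} B_{b j} C_{c j}. Let Φ : Fin d × Fin d × Fin d → ℝ and φ ≥ 0 satisfy |Σ_{k,z,u} Φ(k,z,u) x_k y_z w_u| ≤ φ‖x‖‖y‖‖w‖ for all x, y, w ∈ ℝ^d. Let T_u and Φ_u denote the u-th third-mode slices of T and Φ, and set E₁ = Σ_{u=1}^{d} T_u Φ_uᵀ. Then for all x, y ∈ ℝ^d, |xᵀ E₁ y| ≤ ‖λ‖ · φ · ‖x‖ · ‖y‖, where ‖λ‖ = √(Σ_{j=1}^{R} λ_j²). -/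
open Matrix BigOperators

/-- Bessel's inequality for the orthonormal columns of a matrix. -/
theorem sum_sq_transpose_mulVec_le {d R : ℕ} {A : Matrix (Fin d) (Fin R) ℝ}
    (hA : Aᵀ * A = 1) (x : Fin d → ℝ) :
    ∑ m, (Aᵀ *ᵥ x) m ^ 2 ≤ ∑ i, x i ^ 2 := by
  set p := Aᵀ *ᵥ x
  have hcross : x ⬝ᵥ (A *ᵥ p) = p ⬝ᵥ p := by
    rw [dotProduct_mulVec, ← mulVec_transpose]
  have hproj : (A *ᵥ p) ⬝ᵥ (A *ᵥ p) = p ⬝ᵥ p := by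
    rw [dotProduct_mulVec, ← mulVec_transpose, mulVec_mulVec, hA, one_mulVec]
  have hnonneg : 0 ≤ (x - A *ᵥ p) ⬝ᵥ (x - A *ᵥ p) :=
    Finset.sum_nonneg fun i _ => mul_self_nonneg _
  rw [sub_dotProduct, dotProduct_sub, dotProduct_sub, dotProduct_comm (A *ᵥ p) x,
    hcross, hproj] at hnonneg
  have hle : p ⬝ᵥ p ≤ x ⬝ᵥ x := by linarith
  simpa only [dotProduct, ← sq] using hle

/-- The cross term of a CP tensor with `Φ`, expanded along the rank-one components. -/
theorem cross_term_eq_sum_components {d R : ℕ} (lam : Fin R → ℝ)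
    (A B C : Matrix (Fin d) (Fin R) ℝ) (Φ : Fin d → Fin d → Fin d → ℝ) (x y : Fin d → ℝ) :
    ∑ i, ∑ j, x i * (∑ u, ∑ b, (∑ m, lam m * A i m * B b m * C u m) * Φ j b u) * y j
      = ∑ m, lam m * ((Aᵀ *ᵥ x) m *
          ∑ k, ∑ z, ∑ u, Φ k z u * y k * B z m * C u m) := by
  have hinner (i j : Fin d) :
      x i * (∑ u, ∑ b, (∑ m, lam m * A i m * B b m * C u m) * Φ j b u) * y j
        = ∑ m, lam m * (A i m * x i * ∑ z, ∑ u, Φ j z u * y j * B z m * C u m) := by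
    simp only [Finset.mul_sum, Finset.sum_mul]
    rw [Finset.sum_comm, Finset.sum_comm (s := (Finset.univ : Finset (Fin R)))]
    refine Finset.sum_congr rfl fun b _ => ?_
    rw [Finset.sum_comm]
    exact Finset.sum_congr rfl fun m _ => Finset.sum_congr rfl fun u _ => by ring
  have houter (m : Fin R) :
      lam m * ((Aᵀ *ᵥ x) m * ∑ k, ∑ z, ∑ u, Φ k z u * y k * B z m * C u m)
        = ∑ i, ∑ j, lam m * (A i m * x i * ∑ z, ∑ u, Φ j z u * y j * B z m * C u m) := by
    simp only [mulVec, dotProduct, transpose_apply]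
    rw [Finset.sum_mul_sum, Finset.mul_sum]
    exact Finset.sum_congr rfl fun i _ => Finset.mul_sum _ _ _
  simp only [hinner, houter]
  rw [Finset.sum_comm (s := (Finset.univ : Finset (Fin R)))]
  refine Finset.sum_congr rfl fun i _ => ?_
  rw [Finset.sum_comm]

/-- Cross term in the initialization perturbation:
`E₁ = Σ_u T_u Φ_uᵀ` satisfies `|xᵀ E₁ y| ≤ ‖λ‖ · φ · ‖x‖ · ‖y‖`. -/
theorem cross_term_perturbation_bound
    {d R : ℕ} (hR : 1 ≤ R) (hRd : R ≤ d)
    (lam : Fin R → ℝ) (A B C : Matrix (Fin d) (Fin R) ℝ)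
    (hA : Aᵀ * A = 1)
    (hBcol : ∀ j, eunorm (fun i => B i j) ≤ 1)
    (hCcol : ∀ j, eunorm (fun i => C i j) ≤ 1)
    (T Φ : Fin d → Fin d → Fin d → ℝ)
    (hT : ∀ a b c, T a b c = ∑ j, lam j * A a j * B b j * C c j)
    (φ : ℝ) (hφ : 0 ≤ φ)
    (hop : ∀ x y w : Fin d → ℝ,
      |∑ k, ∑ z, ∑ u, Φ k z u * x k * y z * w u| ≤ φ * eunorm x * eunorm y * eunorm w) :
    ∀ x y : Fin d → ℝ,
      |∑ i, ∑ j, x i * (∑ u, ∑ b, T i b u * Φ j b u) * y j|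
        ≤ Real.sqrt (∑ m, lam m ^ 2) * φ * eunorm x * eunorm y := by
  intro x y
  have hcomp (m : Fin R) :
      |∑ k, ∑ z, ∑ u, Φ k z u * y k * B z m * C u m| ≤ φ * eunorm y := by
    have hy : 0 ≤ φ * eunorm y := mul_nonneg hφ (Real.sqrt_nonneg _)
    calc _ ≤ φ * eunorm y * eunorm (fun i => B i m) * eunorm (fun i => C i m) :=
          hop y (fun i => B i m) (fun i => C i m)
      _ ≤ φ * eunorm y * 1 * 1 := by
          gcongr
          · exact Real.sqrt_nonneg _
          · exact hBcol m
          · exact hCcol m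
      _ = φ * eunorm y := by ring
  have hcs : ∑ m, |lam m| * |(Aᵀ *ᵥ x) m| ≤ Real.sqrt (∑ m, lam m ^ 2) * eunorm x := by
    refine (Real.sum_mul_le_sqrt_mul_sqrt _ _ _).trans ?_
    simp only [sq_abs]
    exact mul_le_mul_of_nonneg_left
      (Real.sqrt_le_sqrt (sum_sq_transpose_mulVec_le hA x)) (Real.sqrt_nonneg _)
  simp only [hT]
  rw [cross_term_eq_sum_components]
  calc _ ≤ ∑ m, |lam m| * |(Aᵀ *ᵥ x) m| * (φ * eunorm y) := by
        refine (Finset.abs_sum_le_sum_abs _ _).trans (Finset.sum_le_sum fun m _ => ?_)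
        rw [abs_mul, abs_mul, ← mul_assoc]
        exact mul_le_mul_of_nonneg_left (hcomp m) (by positivity)
    _ = (∑ m, |lam m| * |(Aᵀ *ᵥ x) m|) * (φ * eunorm y) := by rw [Finset.sum_mul]
    _ ≤ Real.sqrt (∑ m, lam m ^ 2) * eunorm x * (φ * eunorm y) :=
        mul_le_mul_of_nonneg_right hcs (mul_nonneg hφ (Real.sqrt_nonneg _))
    _ = _ := by ring
end

section
/- Let d ≥ R ≥ 1, λ : Fin R → ℝ, and let A ∈ ℝ^{d×R} have orthonormal columns with columns a_r. Define the symmetric tensor T(x,y,z) = Σ_{r=1}^{R} λ_r A_{x r} A_{y r} A_{z r}. Let Φ : Fin d × Fin d × Fin d → ℝ and φ ≥ 0 satisfy |Σ_{k,z,u} Φ(k,z,u) x_k y_z w_u| ≤ φ‖x‖‖y‖‖w‖ for all x, y, w ∈ ℝ^d, and let T̂ = T + Φ. Define v̂ ∈ ℝ^d by v̂_k = Σ_{l=1}^{d} T̂(l,l,k) and M̂ ∈ ℝ^{d×d} by M̂_{i j} = Σ_{k=1}^{d} T̂(i,j,k) v̂_k. Then there exists λ' : Fin R → ℝ such that |λ'_r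 − λ_r²| ≤ |λ_r| · d^{3/2} · φ for every r, and for all x, y ∈ ℝ^d, |xᵀ (M̂ − Σ_{r=1}^{R} λ'_r a_r a_rᵀ) y| ≤ (‖λ‖·φ + d^{3/2}·φ²) · ‖x‖ · ‖y‖, where ‖λ‖ = √(Σ_{r=1}^{R} λ_r²). -/
open Matrix BigOperators

theorem eunorm_eq_norm_toLp {n : ℕ} (x : Fin n → ℝ) : eunorm x = ‖WithLp.toLp 2 x‖ := by
  simp [eunorm, EuclideanSpace.norm_eq]

theorem eunorm_add_le {n : ℕ} (x y : Fin n → ℝ) : eunorm (x + y) ≤ eunorm x + eunorm y := by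
  simp only [eunorm_eq_norm_toLp, WithLp.toLp_add]
  exact norm_add_le _ _

theorem eunorm_single_one {n : ℕ} (l : Fin n) : eunorm (Pi.single l (1 : ℝ)) = 1 := by
  simp [eunorm, Pi.single_apply]

theorem sum_mul_eq_ite_of_transpose_mul_self {d R : ℕ} {A : Matrix (Fin d) (Fin R) ℝ}
    (hA : Aᵀ * A = 1) (m n : Fin R) : ∑ k, A k m * A k n = if m = n then 1 else 0 := by
  simpa [Matrix.mul_apply, Matrix.one_apply] using congrFun (congrFun hA m) n

theorem eunorm_col {d R : ℕ} {A : Matrix (Fin d) (Fin R) ℝ} (hA : Aᵀ * A = 1) (m : Fin R) :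
    eunorm (fun k => A k m) = 1 := by
  simpa [eunorm, ← pow_two] using sum_mul_eq_ite_of_transpose_mul_self hA m m

/-- A matrix with orthonormal columns is an isometry. -/
theorem eunorm_mulVec {d R : ℕ} {A : Matrix (Fin d) (Fin R) ℝ} (hA : Aᵀ * A = 1)
    (c : Fin R → ℝ) : eunorm (A *ᵥ c) = eunorm c := by
  have h : (A *ᵥ c) ⬝ᵥ (A *ᵥ c) = c ⬝ᵥ c := by
    rw [Matrix.dotProduct_mulVec, Matrix.vecMul_mulVec, hA, Matrix.vecMul_one]
  simp only [dotProduct, ← pow_two] at h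
  rw [eunorm, h, eunorm]

/-- Pairing a vector with the slice traces of a tensor of operator norm at most `φ`. -/
theorem abs_sum_slice_trace_mul_le {d : ℕ} {Φ : Fin d → Fin d → Fin d → ℝ} {φ : ℝ}
    (hop : ∀ x y w : Fin d → ℝ,
      |∑ k, ∑ z, ∑ u, Φ k z u * x k * y z * w u| ≤ φ * eunorm x * eunorm y * eunorm w)
    (u : Fin d → ℝ) : |∑ k, (∑ l, Φ l l k) * u k| ≤ d * φ * eunorm u := by
  have hslice (l : Fin d) : |∑ k, Φ l l k * u k| ≤ φ * eunorm u := by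
    simpa [eunorm_single_one, Pi.single_apply, ite_mul, mul_ite, Finset.sum_ite_irrel] using
      hop (Pi.single l 1) (Pi.single l 1) u
  calc |∑ k, (∑ l, Φ l l k) * u k| = |∑ l, ∑ k, Φ l l k * u k| := by
        simp only [Finset.sum_mul]
        rw [Finset.sum_comm]
    _ ≤ ∑ l, |∑ k, Φ l l k * u k| := Finset.abs_sum_le_sum_abs _ _
    _ ≤ ∑ _l : Fin d, φ * eunorm u := Finset.sum_le_sum fun l _ => hslice l
    _ = d * φ * eunorm u := by simp [mul_assoc]

/-- The Euclidean norm of a vector is at most any bound on the functional it represents. -/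
theorem eunorm_le_of_abs_sum_mul_le {n : ℕ} {w : Fin n → ℝ} {c : ℝ} (hc : 0 ≤ c)
    (h : ∀ u : Fin n → ℝ, |∑ k, w k * u k| ≤ c * eunorm u) : eunorm w ≤ c := by
  have hsq : eunorm w ^ 2 = ∑ k, w k * w k := by
    rw [eunorm, Real.sq_sqrt (Finset.sum_nonneg fun i _ => sq_nonneg _)]
    simp only [pow_two]
  have hw := (le_abs_self _).trans (h w)
  rw [← hsq] at hw
  nlinarith [eunorm_nonneg w]

/-- Perturbation of the trace-based initialization for a noisy symmetric tensor:
`M̂ = Σ_r λ'_r a_r a_rᵀ + Φ_M` with `|λ'_r − λ_r²| ≤ |λ_r| d^{3/2} φ` and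
`‖Φ_M‖_op ≤ ‖λ‖φ + d^{3/2}φ²`. -/
theorem symmetric_init_perturbation
    {d R : ℕ} (hR : 1 ≤ R) (hRd : R ≤ d)
    (lam : Fin R → ℝ) (A : Matrix (Fin d) (Fin R) ℝ) (hA : Aᵀ * A = 1)
    (T Φ : Fin d → Fin d → Fin d → ℝ)
    (hT : ∀ x y z, T x y z = ∑ m, lam m * A x m * A y m * A z m)
    (φ : ℝ) (hφ : 0 ≤ φ)
    (hop : ∀ x y w : Fin d → ℝ,
      |∑ k, ∑ z, ∑ u, Φ k z u * x k * y z * w u| ≤ φ * eunorm x * eunorm y * eunorm w)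
    (vhat : Fin d → ℝ) (hv : ∀ k, vhat k = ∑ l, (T l l k + Φ l l k))
    (Mhat : Matrix (Fin d) (Fin d) ℝ)
    (hM : ∀ i j, Mhat i j = ∑ k, (T i j k + Φ i j k) * vhat k) :
    ∃ lam' : Fin R → ℝ,
      (∀ m, |lam' m - lam m ^ 2| ≤ |lam m| * (d : ℝ) ^ ((3 : ℝ) / 2) * φ) ∧
      ∀ x y : Fin d → ℝ,
        |∑ i, ∑ j, x i * (Mhat i j - ∑ m, lam' m * A i m * A j m) * y j|
          ≤ (Real.sqrt (∑ m, lam m ^ 2) * φ + (d : ℝ) ^ ((3 : ℝ) / 2) * φ ^ 2) *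
              eunorm x * eunorm y := by
  obtain ⟨w, hw⟩ : ∃ w : Fin d → ℝ, ∀ k, w k = ∑ l, Φ l l k := ⟨_, fun _ => rfl⟩
  have hd : (1 : ℝ) ≤ d := by exact_mod_cast hR.trans hRd
  have hpow : (d : ℝ) ≤ (d : ℝ) ^ ((3 : ℝ) / 2) := by
    simpa using Real.rpow_le_rpow_of_exponent_le hd (by norm_num : (1 : ℝ) ≤ 3 / 2)
  have hpair (u : Fin d → ℝ) : |∑ k, w k * u k| ≤ (d : ℝ) ^ ((3 : ℝ) / 2) * φ * eunorm u := by
    simp only [hw]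
    refine (abs_sum_slice_trace_mul_le hop u).trans ?_
    gcongr
    exact eunorm_nonneg u
  have hwnorm : eunorm w ≤ (d : ℝ) ^ ((3 : ℝ) / 2) * φ :=
    eunorm_le_of_abs_sum_mul_le (by positivity) hpair
  have horth := sum_mul_eq_ite_of_transpose_mul_self hA
  have hvhat : vhat = A *ᵥ lam + w := by
    ext k
    rw [hv, Finset.sum_add_distrib, Pi.add_apply, hw]
    congr 1
    simp only [hT, Matrix.mulVec, dotProduct]
    rw [Finset.sum_comm]
    refine Finset.sum_congr rfl fun m _ => ?_
    calc ∑ l, lam m * A l m * A l m * A k m = lam m * A k m * ∑ l, A l m * A l m := by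
          rw [Finset.mul_sum]
          exact Finset.sum_congr rfl fun l _ => by ring
      _ = A k m * lam m := by rw [horth, if_pos rfl]; ring
  have hinner (m : Fin R) : ∑ k, A k m * vhat k = lam m + ∑ k, w k * A k m := by
    have hmul : ∑ k, A k m * (A *ᵥ lam) k = lam m := by
      calc ∑ k, A k m * (A *ᵥ lam) k = (Aᵀ *ᵥ (A *ᵥ lam)) m := rfl
        _ = lam m := by rw [Matrix.mulVec_mulVec, hA, Matrix.one_mulVec]
    simp only [hvhat, Pi.add_apply, mul_add, Finset.sum_add_distrib, hmul]
    simp only [mul_comm]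
  refine ⟨fun m => lam m * ∑ k, A k m * vhat k, fun m => ?_, fun x y => ?_⟩
  · have h := hpair fun k => A k m
    rw [eunorm_col hA, mul_one] at h
    calc |lam m * ∑ k, A k m * vhat k - lam m ^ 2| = |lam m| * |∑ k, w k * A k m| := by
          rw [hinner, ← abs_mul]
          ring_nf
      _ ≤ |lam m| * (d : ℝ) ^ ((3 : ℝ) / 2) * φ := by
          rw [mul_assoc]
          gcongr
  · have hres (i j : Fin d) :
        Mhat i j - ∑ m, lam m * (∑ k, A k m * vhat k) * A i m * A j m
          = ∑ k, Φ i j k * vhat k := by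
      have hsignal : ∑ k, T i j k * vhat k
          = ∑ m, lam m * (∑ k, A k m * vhat k) * A i m * A j m := by
        simp only [hT, Finset.sum_mul, Finset.mul_sum]
        rw [Finset.sum_comm]
        exact Finset.sum_congr rfl fun m _ => Finset.sum_congr rfl fun k _ => by ring
      rw [hM, ← hsignal]
      simp only [add_mul, Finset.sum_add_distrib, add_sub_cancel_left]
    have hform : ∑ i, ∑ j, x i * (Mhat i j -
          ∑ m, lam m * (∑ k, A k m * vhat k) * A i m * A j m) * y j
        = ∑ i, ∑ j, ∑ k, Φ i j k * x i * y j * vhat k := by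
      refine Finset.sum_congr rfl fun i _ => Finset.sum_congr rfl fun j _ => ?_
      rw [hres, Finset.mul_sum, Finset.sum_mul]
      exact Finset.sum_congr rfl fun k _ => by ring
    have hvnorm : eunorm vhat ≤ √(∑ m, lam m ^ 2) + (d : ℝ) ^ ((3 : ℝ) / 2) * φ := by
      rw [hvhat]
      refine (eunorm_add_le _ _).trans (add_le_add ?_ hwnorm)
      rw [eunorm_mulVec hA, eunorm]
    have hx := eunorm_nonneg x
    have hy := eunorm_nonneg y
    rw [hform]
    calc |∑ i, ∑ j, ∑ k, Φ i j k * x i * y j * vhat k|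
        ≤ φ * eunorm x * eunorm y * eunorm vhat := hop x y vhat
      _ ≤ φ * eunorm x * eunorm y *
          (√(∑ m, lam m ^ 2) + (d : ℝ) ^ ((3 : ℝ) / 2) * φ) := by gcongr
      _ = _ := by ring
end

section
/- Let d_r > d_{r+1} ≥ 0 be real numbers with gap := d_r − d_{r+1}, let φ ≥ 0, let θ ∈ [0, π/2), and set u := φ / (gap · cos θ). If 2u ≤ 1, then d_r · cos θ − φ > 0 and (d_{r+1} · sin θ + φ) / (d_r · cos θ − φ) ≤ max( (d_{r+1}/d_r)^{1−2u} · tan θ, 1 ), where (d_{r+1}/d_r)^{1−2u} denotes the real power of the nonnegative real d_{r+1}/d_r with exponent 1−2u. -/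
open Real

/-- Normalized form of the step: `q` is the eigenvalue ratio and `t` the tangent of the angle. -/
theorem mul_add_le_max_rpow_mul_one (q t u : ℝ) (hq0 : 0 ≤ q) (hq1 : q ≤ 1)
    (hu0 : 0 ≤ u) (h2u : 2 * u ≤ 1) :
    q * t + u * (1 - q) ≤ max (q ^ (1 - 2 * u) * t) 1 * (1 - u * (1 - q)) := by
  set M := max (q ^ (1 - 2 * u) * t) 1
  have hM1 : 1 ≤ M := le_max_right _ _
  have hMt : q ^ (1 - 2 * u) * t ≤ M := le_max_left _ _
  have hsplit : q = q ^ (2 * u) * q ^ (1 - 2 * u) := by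
    rw [← Real.rpow_add' hq0 (by norm_num)]
    simp
  have hbern : q ^ (2 * u) ≤ 1 - 2 * u * (1 - q) := by
    have h := Real.geom_mean_le_arith_mean2_weighted (w₁ := 2 * u) (w₂ := 1 - 2 * u)
      (by linarith) (by linarith) hq0 zero_le_one (by ring)
    rw [Real.one_rpow] at h
    linarith
  have hqt : q * t ≤ (1 - 2 * u * (1 - q)) * M :=
    calc q * t = q ^ (2 * u) * (q ^ (1 - 2 * u) * t) := by rw [← mul_assoc, ← hsplit]
      _ ≤ q ^ (2 * u) * M := by gcongr
      _ ≤ (1 - 2 * u * (1 - q)) * M := by gcongr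
  have huM : u * (1 - q) * 1 ≤ u * (1 - q) * M :=
    mul_le_mul_of_nonneg_left hM1 (mul_nonneg hu0 (by linarith))
  linarith

/-- One step of matrix subspace iteration on a perturbed matrix: with
`u = φ/(gap·cos θ)` and `2u ≤ 1`, the new tangent is at most
`max((d_{r+1}/d_r)^{1−2u} tan θ, 1)`. -/
theorem noisy_matrix_subspace_iteration_step
    (dr dr1 φ θ gap u : ℝ)
    (hdr1 : 0 ≤ dr1) (hlt : dr1 < dr)
    (hgap : gap = dr - dr1)
    (hφ : 0 ≤ φ)
    (hθ0 : 0 ≤ θ) (hθ1 : θ < Real.pi / 2)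
    (hu : u = φ / (gap * Real.cos θ))
    (h2u : 2 * u ≤ 1) :
    0 < dr * Real.cos θ - φ ∧
    (dr1 * Real.sin θ + φ) / (dr * Real.cos θ - φ)
      ≤ max ((dr1 / dr) ^ (1 - 2 * u) * Real.tan θ) 1 := by
  have hc : 0 < Real.cos θ := Real.cos_pos_of_mem_Ioo ⟨by linarith [Real.pi_pos], hθ1⟩
  have hdr : 0 < dr := hdr1.trans_lt hlt
  have hg : 0 < gap := by linarith
  have hu0 : 0 ≤ u := by rw [hu]; positivity
  have hφu : φ = u * (gap * Real.cos θ) := by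
    rw [hu]
    field_simp
  have hpos : 0 < dr * Real.cos θ - φ := by
    have h₁ : u * (gap * Real.cos θ) ≤ 1 / 2 * (gap * Real.cos θ) := by
      gcongr
      linarith
    have h₂ : 0 ≤ dr1 * Real.cos θ := by positivity
    have h₃ : 0 < dr * Real.cos θ := by positivity
    rw [hgap] at h₁ hφu
    linarith
  refine ⟨hpos, (div_le_iff₀ hpos).2 ?_⟩
  have key := mul_add_le_max_rpow_mul_one (dr1 / dr) (Real.tan θ) u (by positivity)
    ((div_le_one hdr).2 hlt.le) hu0 h2u
  have hnum : dr1 * Real.sin θ + φ =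
      (dr1 / dr * Real.tan θ + u * (1 - dr1 / dr)) * (dr * Real.cos θ) := by
    rw [hφu, hgap, Real.tan_eq_sin_div_cos]
    field_simp
  have hden : dr * Real.cos θ - φ = (1 - u * (1 - dr1 / dr)) * (dr * Real.cos θ) := by
    rw [hφu, hgap]
    field_simp
  rw [hnum, hden, ← mul_assoc (max _ _)]
  exact mul_le_mul_of_nonneg_right key (by positivity)
end

section
/- Let λ_r > λ_{r+1} ≥ 0 be real numbers with gap := λ_r − λ_{r+1}, let σ ≥ 0, let ε' > 0, and let θ_B, θ_C ∈ [0, π/4]. Set r₁ := √2·σ / (ε'·gap), r₂ := 2σ / gap, and θ := 1 − 2r₁ − r₂, and assume θ > 0. Then λ_r · cos θ_B · cos θ_C − σ > 0 and (λ_{r+1} · sin θ_B · sin θ_C + σ) / (λ_r · cos θ_B · cos θ_C − σ) ≤ max( max( (λ_{r+1}/λ_r)^θ, ε' ) · tan θ_B · tan θ_C, ε' ), where (λ_{r+1}/λ_r)^θ denotes the real power of the nonnegative real λ_{r+1}/λ_r with exponent θ. -/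
open Real

/-- A consequence of the weighted AM-GM inequality `b ^ (1 - θ) * a ^ θ ≤ (1 - θ) * b + θ * a`. -/
theorem le_div_rpow_mul_weighted_mean {a b θ : ℝ} (ha : 0 < a) (hb : 0 ≤ b)
    (hθ0 : 0 ≤ θ) (hθ1 : θ ≤ 1) :
    b ≤ (b / a) ^ θ * (b + θ * (a - b)) := by
  have hx : 0 ≤ b / a := div_nonneg hb ha.le
  have amgm := Real.geom_mean_le_arith_mean2_weighted (sub_nonneg.2 hθ1) hθ0 hx zero_le_one
    (by ring)
  rw [Real.one_rpow, mul_one, mul_one] at amgm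
  have hsplit : b / a = (b / a) ^ θ * (b / a) ^ (1 - θ) := by
    rw [← Real.rpow_add_of_nonneg hx hθ0 (sub_nonneg.2 hθ1), add_sub_cancel, Real.rpow_one]
  calc b = a * (b / a) := by field_simp
    _ = a * ((b / a) ^ θ * (b / a) ^ (1 - θ)) := by rw [← hsplit]
    _ ≤ a * ((b / a) ^ θ * ((1 - θ) * (b / a) + θ)) := by gcongr
    _ = (b / a) ^ θ * (b + θ * (a - b)) := by field_simp; ring

/-- Cosine is at least `√2 / 2` on `[0, π / 4]`. -/
theorem sqrt_two_div_two_le_cos {x : ℝ} (h0 : 0 ≤ x) (h1 : x ≤ Real.pi / 4) :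
    √2 / 2 ≤ Real.cos x := by
  rw [← Real.cos_pi_div_four]
  exact Real.cos_le_cos_of_nonneg_of_le_pi h0 (by linarith [Real.pi_pos]) h1

/-- One step of alternating subspace iteration on a noisy tensor: with
`r₁ = √2 σ/(ε' gap)`, `r₂ = 2σ/gap`, `θ = 1 − 2r₁ − r₂ > 0`, the new tangent is at most
`max(max((λ_{r+1}/λ_r)^θ, ε') · tan θ_B · tan θ_C, ε')`. -/
theorem noisy_alternating_subspace_iteration_step
    (lamr lamr1 σ ε' gap r₁ r₂ θ θB θC : ℝ)
    (hlamr1 : 0 ≤ lamr1) (hlt : lamr1 < lamr)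
    (hgap : gap = lamr - lamr1)
    (hσ : 0 ≤ σ) (hε' : 0 < ε')
    (hθB0 : 0 ≤ θB) (hθB1 : θB ≤ Real.pi / 4)
    (hθC0 : 0 ≤ θC) (hθC1 : θC ≤ Real.pi / 4)
    (hr₁ : r₁ = Real.sqrt 2 * σ / (ε' * gap))
    (hr₂ : r₂ = 2 * σ / gap)
    (hθ : θ = 1 - 2 * r₁ - r₂)
    (hθpos : 0 < θ) :
    0 < lamr * Real.cos θB * Real.cos θC - σ ∧
    (lamr1 * Real.sin θB * Real.sin θC + σ) / (lamr * Real.cos θB * Real.cos θC - σ)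
      ≤ max (max ((lamr1 / lamr) ^ θ) ε' * Real.tan θB * Real.tan θC) ε' := by
  have hlamr : 0 < lamr := hlamr1.trans_lt hlt
  have hg : 0 < gap := by linarith
  have hB := sqrt_two_div_two_le_cos hθB0 hθB1
  have hC := sqrt_two_div_two_le_cos hθC0 hθC1
  have hsq : √2 * √2 = 2 := Real.mul_self_sqrt (by norm_num)
  have hs1 : 1 ≤ √2 := Real.one_le_sqrt.2 (by norm_num)
  have hcB : 0 < Real.cos θB := by linarith
  have hcC : 0 < Real.cos θC := by linarith
  have htB : 0 ≤ Real.tan θB :=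
    Real.tan_nonneg_of_nonneg_of_le_pi_div_two hθB0 (by linarith [Real.pi_pos])
  have htC : 0 ≤ Real.tan θC :=
    Real.tan_nonneg_of_nonneg_of_le_pi_div_two hθC0 (by linarith [Real.pi_pos])
  have hsin : lamr1 * Real.sin θB * Real.sin θC
      = Real.cos θB * Real.cos θC * (lamr1 * (Real.tan θB * Real.tan θC)) := by
    rw [← Real.tan_mul_cos hcB.ne', ← Real.tan_mul_cos hcC.ne']; ring
  have hc : 1 / 2 ≤ Real.cos θB * Real.cos θC := by nlinarith
  have hr₁0 : 0 ≤ r₁ := by rw [hr₁]; positivity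
  have hr₂0 : 0 ≤ r₂ := by rw [hr₂]; positivity
  have hr₂g : r₂ * gap = 2 * σ := by rw [hr₂]; field_simp
  have hr₁g : r₁ * gap * ε' = √2 * σ := by rw [hr₁]; field_simp
  have hweighted := le_div_rpow_mul_weighted_mean hlamr hlamr1 hθpos.le (by linarith : θ ≤ 1)
  rw [← hgap] at hweighted
  have hpos : 0 < lamr * Real.cos θB * Real.cos θC - σ := by nlinarith
  refine ⟨hpos, ?_⟩
  rw [div_le_iff₀ hpos, hsin]
  set c := Real.cos θB * Real.cos θC with hcdef
  set t := Real.tan θB * Real.tan θC with htdef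
  have ht : 0 ≤ t := mul_nonneg htB htC
  rw [mul_assoc lamr, mul_assoc _ (Real.tan θB), ← hcdef, ← htdef]
  set X := (lamr1 / lamr) ^ θ
  set M := max (max X ε' * t) ε'
  have hMε : ε' ≤ M := le_max_right _ _
  have hMX : X * t ≤ M :=
    (mul_le_mul_of_nonneg_right (le_max_left X ε') ht).trans (le_max_left _ _)
  have hM : 0 ≤ M := hε'.le.trans hMε
  have hsignal : lamr1 * t ≤ M * (lamr1 + θ * gap) :=
    calc lamr1 * t ≤ X * (lamr1 + θ * gap) * t := by gcongr
      _ = X * t * (lamr1 + θ * gap) := by ring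
      _ ≤ M * (lamr1 + θ * gap) := by gcongr
  have hnoise : 2 * σ ≤ M * (2 * r₁ * gap) :=
    calc 2 * σ ≤ 2 * (√2 * σ) := by nlinarith
      _ = ε' * (2 * r₁ * gap) := by rw [← hr₁g]; ring
      _ ≤ M * (2 * r₁ * gap) := by gcongr
  have hσc : σ ≤ c * (2 * σ) := by nlinarith
  calc c * (lamr1 * t) + σ
      ≤ c * (M * (lamr1 + θ * gap)) + c * (M * (2 * r₁ * gap)) := by
        gcongr
        exact hσc.trans (by gcongr)
    _ = M * (c * (lamr1 + gap - r₂ * gap)) := by rw [hθ]; ring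
    _ = M * (lamr * c - c * (2 * σ)) := by rw [hr₂g, hgap]; ring
    _ ≤ M * (lamr * c - σ) := by gcongr
end
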